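/- Let r > 0, σ > 0, γ ∈ [1/2, 1), S₀ > 0, T > 0 and x ≥ 0, and define f : [0, T] → ℝ by f(t) = (S₀^{1−γ} + (xσ/r)(1 − e^{−r(1−γ)t}))^{1/(1−γ)}. Suppose g : [0, T] → ℝ is continuous and nonnegative and satisfies the integral inequality g(t) ≥ S₀ + ∫₀ᵗ x σ e^{−r(1−γ)s} g(s)^γ ds for every t ∈ [0, T]. Then g(t) ≥ f(t) for every t ∈ [0, T]. In other words, f is a lower bound for any continuous nonnegative function dominating its own integral transform, in particular for the mean t ↦ E_{Q₁}[X_t] of the CEV diffusion under the tilted measure. -/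

import Mathlib

/-!
This is the reverse form of the Bihari–LaSalle argument. The right-hand side
`h t = c + ∫ s in a..t, w s * ω (g s)` of the integral inequality is differentiable, and since
`h ≤ g` and `ω` is monotone, `h' = w * ω ∘ g ≥ w * ω ∘ h`. If `Φ' = 1 / ω`, this says
`(Φ ∘ h)' ≥ w`, so `Φ c + ∫ w ≤ Φ ∘ h ≤ Φ ∘ g`. For `ω y = y ^ γ` one takes
`Φ y = y ^ (1 - γ) / (1 - γ)`.

The function `g` stays in the half-line `(d, ∞)`, `d < c`, where `ω` is positive: at a first time
with `g ≤ d` the integrand would have been nonnegative so far, forcing `g ≥ c`.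
-/

open Set MeasureTheory intervalIntegral

theorem forall_mem_Icc_lt_of_forall_Ico_lt {α β : Type*} [ConditionallyCompleteLinearOrder α]
    [TopologicalSpace α] [OrderTopology α] [LinearOrder β] [TopologicalSpace β]
    [OrderClosedTopology β] {a b : α} {d : β} {g : α → β} (hg : ContinuousOn g (Icc a b))
    (hstep : ∀ t ∈ Icc a b, (∀ s ∈ Ico a t, d < g s) → d < g t) :
    ∀ t ∈ Icc a b, d < g t := by
  by_contra! hexists
  have hcompact : IsCompact (Icc a b ∩ g ⁻¹' Iic d) :=
    isCompact_Icc.of_isClosed_subset (hg.preimage_isClosed_of_isClosed isClosed_Icc isClosed_Iic)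
      inter_subset_left
  obtain ⟨t, ⟨ht, htd⟩, hleast⟩ := hcompact.exists_isLeast hexists
  refine (hstep t ht fun s hs => ?_).not_ge htd
  by_contra! hsd
  exact hs.2.not_ge (hleast ⟨⟨hs.1, hs.2.le.trans ht.2⟩, hsd⟩)

theorem hasDerivAt_integral_of_continuousOn_Icc {E : Type*} [NormedAddCommGroup E]
    [NormedSpace ℝ E] [CompleteSpace E] {a b t : ℝ} {k : ℝ → E} (hk : ContinuousOn k (Icc a b))
    (ht : t ∈ Ioo a b) :
    HasDerivAt (fun u => ∫ s in a..u, k s) (k t) t := by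
  have hnhds : Icc a b ∈ nhds t := Icc_mem_nhds ht.1 ht.2
  exact integral_hasDerivAt_right
    ((hk.mono (Icc_subset_Icc_right ht.2.le)).intervalIntegrable_of_Icc ht.1.le)
    ⟨_, hnhds, hk.aestronglyMeasurable measurableSet_Icc⟩ (hk.continuousAt hnhds)

theorem integral_exp_const_mul {k : ℝ} (hk : k ≠ 0) (a b : ℝ) :
    ∫ s in a..b, Real.exp (k * s) = (Real.exp (k * b) - Real.exp (k * a)) / k := by
  rw [integral_comp_mul_left Real.exp hk, integral_exp, smul_eq_mul, inv_mul_eq_div]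

theorem rpow_inv_le_of_div_add_le_div {p c y W : ℝ} (hp : p ≠ 0) (hc : 0 < c) (hy : 0 < y)
    (hW : 0 ≤ W) (h : c ^ p / p + W ≤ y ^ p / p) : (c ^ p + p * W) ^ p⁻¹ ≤ y := by
  have hscale : p * (c ^ p / p + W) = c ^ p + p * W := by field_simp
  rcases hp.lt_or_gt with hneg | hpos
  · have hle : y ^ p ≤ c ^ p + p * W := by
      rw [← hscale, mul_comm, ← le_div_iff_of_neg hneg]
      exact h
    exact (Real.rpow_inv_le_iff_of_neg ((Real.rpow_pos_of_pos hy p).trans_le hle) hy hneg).2 hle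
  · have hle : c ^ p + p * W ≤ y ^ p := by
      rw [← hscale, ← le_div_iff₀' hpos]
      exact h
    exact (Real.rpow_inv_le_iff_of_pos (by positivity) hy.le hpos).2 hle

section Bihari

variable {a b c d : ℝ} {w ω Φ g : ℝ → ℝ}

theorem lt_of_add_integral_mul_comp_le (hdc : d < c) (hw : ∀ t ∈ Icc a b, 0 ≤ w t)
    (hω : ∀ y ∈ Ioi d, 0 ≤ ω y) (hg : ContinuousOn g (Icc a b))
    (hle : ∀ t ∈ Icc a b, c + ∫ s in a..t, w s * ω (g s) ≤ g t) :
    ∀ t ∈ Icc a b, d < g t := by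
  refine forall_mem_Icc_lt_of_forall_Ico_lt hg fun t ht hlt => ?_
  have hintegral : 0 ≤ ∫ s in a..t, w s * ω (g s) := by
    rw [integral_of_le ht.1, integral_Ioc_eq_integral_Ioo]
    exact setIntegral_nonneg measurableSet_Ioo fun s hs =>
      mul_nonneg (hw s ⟨hs.1.le, hs.2.le.trans ht.2⟩) (hω _ (hlt s ⟨hs.1.le, hs.2⟩))
  linarith [hle t ht]

theorem add_integral_le_comp_of_mul_comp_le_deriv {h h' : ℝ → ℝ} {D : Set ℝ} (hab : a ≤ b)
    (hw : IntegrableOn w (Icc a b)) (hω : ∀ y ∈ D, 0 < ω y)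
    (hΦ : ∀ y ∈ D, HasDerivAt Φ (ω y)⁻¹ y) (hh : ContinuousOn h (Icc a b))
    (hD : MapsTo h (Icc a b) D) (hderiv : ∀ t ∈ Ioo a b, HasDerivAt h (h' t) t)
    (hle : ∀ t ∈ Ioo a b, w t * ω (h t) ≤ h' t) :
    Φ (h a) + ∫ s in a..b, w s ≤ Φ (h b) := by
  have hΦh : ContinuousOn (Φ ∘ h) (Icc a b) :=
    ContinuousOn.comp (fun y hy => (hΦ y hy).continuousAt.continuousWithinAt) hh hD
  have hintegral : ∫ s in a..b, w s ≤ Φ (h b) - Φ (h a) := by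
    refine integral_le_sub_of_hasDeriv_right_of_le hab hΦh (fun t ht =>
      ((hΦ _ (hD (Ioo_subset_Icc_self ht))).comp t (hderiv t ht)).hasDerivWithinAt) hw
      fun t ht => ?_
    rw [inv_mul_eq_div, le_div_iff₀ (hω _ (hD (Ioo_subset_Icc_self ht)))]
    exact hle t ht
  linarith

theorem monotoneOn_Ioi_of_hasDerivAt_inv (hω : ∀ y ∈ Ioi d, 0 < ω y)
    (hΦ : ∀ y ∈ Ioi d, HasDerivAt Φ (ω y)⁻¹ y) : MonotoneOn Φ (Ioi d) := by
  refine monotoneOn_of_hasDerivWithinAt_nonneg (f' := fun y => (ω y)⁻¹) (convex_Ioi d)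
    (fun y hy => (hΦ y hy).continuousAt.continuousWithinAt) ?_ ?_ <;> rw [interior_Ioi]
  · exact fun y hy => (hΦ y hy).hasDerivWithinAt
  · exact fun y hy => (inv_pos.2 (hω y hy)).le

theorem add_integral_le_comp_of_add_integral_mul_comp_le (hdc : d < c)
    (hwc : ContinuousOn w (Icc a b)) (hw : ∀ t ∈ Icc a b, 0 ≤ w t)
    (hωc : ContinuousOn ω (Ioi d)) (hωmono : MonotoneOn ω (Ioi d)) (hω : ∀ y ∈ Ioi d, 0 < ω y)
    (hΦ : ∀ y ∈ Ioi d, HasDerivAt Φ (ω y)⁻¹ y) (hg : ContinuousOn g (Icc a b))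
    (hle : ∀ t ∈ Icc a b, c + ∫ s in a..t, w s * ω (g s) ≤ g t) :
    ∀ t ∈ Icc a b, Φ c + ∫ s in a..t, w s ≤ Φ (g t) := by
  intro t ht
  have hgd : MapsTo g (Icc a b) (Ioi d) :=
    lt_of_add_integral_mul_comp_le hdc hw (fun y hy => (hω y hy).le) hg hle
  set h : ℝ → ℝ := fun u => c + ∫ s in a..u, w s * ω (g s) with h_def
  have hkc : ContinuousOn (fun s => w s * ω (g s)) (Icc a b) := hwc.mul (hωc.comp hg hgd)
  have hhd : MapsTo h (Icc a b) (Ioi d) := fun u hu =>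
    hdc.trans_le <| le_add_of_nonneg_right <| integral_nonneg hu.1 fun s hs =>
      have hs' : s ∈ Icc a b := ⟨hs.1, hs.2.trans hu.2⟩
      mul_nonneg (hw s hs') (hω _ (hgd hs')).le
  have hhc : ContinuousOn h (Icc a b) := by
    rw [← uIcc_of_le (ht.1.trans ht.2)] at hkc ⊢
    exact continuousOn_const.add
      (continuousOn_primitive_interval' hkc.intervalIntegrable left_mem_uIcc)
  have hsub : Icc a t ⊆ Icc a b := Icc_subset_Icc_right ht.2
  have hIoo : Ioo a t ⊆ Ioo a b := Ioo_subset_Ioo_right ht.2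
  calc Φ c + ∫ s in a..t, w s
      = Φ (h a) + ∫ s in a..t, w s := by simp only [h_def, integral_same, add_zero]
    _ ≤ Φ (h t) := by
        refine add_integral_le_comp_of_mul_comp_le_deriv ht.1 (hwc.mono hsub).integrableOn_Icc hω
          hΦ (hhc.mono hsub) (hhd.mono_left hsub)
          (fun u hu => (hasDerivAt_integral_of_continuousOn_Icc hkc (hIoo hu)).const_add c)
          fun u hu => ?_
        have hu' : u ∈ Icc a b := Ioo_subset_Icc_self (hIoo hu)
        exact mul_le_mul_of_nonneg_left (hωmono (hhd hu') (hgd hu') (hle u hu')) (hw u hu')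
    _ ≤ Φ (g t) := monotoneOn_Ioi_of_hasDerivAt_inv hω hΦ (hhd ht) (hgd ht) (hle t ht)

end Bihari

theorem hasDerivAt_rpow_one_sub_div {γ y : ℝ} (hγ : γ ≠ 1) (hy : 0 < y) :
    HasDerivAt (fun z => z ^ (1 - γ) / (1 - γ)) (y ^ γ)⁻¹ y := by
  convert! (Real.hasDerivAt_rpow_const (p := 1 - γ) (Or.inl hy.ne')).div_const (1 - γ) using 1
  rw [mul_div_cancel_left₀ _ (sub_ne_zero.2 hγ.symm), ← Real.rpow_neg hy.le]
  congr 1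
  ring

theorem rpow_add_integral_rpow_inv_le {a b c γ : ℝ} {w g : ℝ → ℝ} (hγ₀ : 0 ≤ γ) (hγ₁ : γ ≠ 1)
    (hc : 0 < c) (hwc : ContinuousOn w (Icc a b)) (hw : ∀ t ∈ Icc a b, 0 ≤ w t)
    (hg : ContinuousOn g (Icc a b))
    (hle : ∀ t ∈ Icc a b, c + ∫ s in a..t, w s * g s ^ γ ≤ g t) :
    ∀ t ∈ Icc a b, (c ^ (1 - γ) + (1 - γ) * ∫ s in a..t, w s) ^ (1 - γ)⁻¹ ≤ g t := by
  intro t ht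
  have hpos : ∀ y ∈ Ioi (0 : ℝ), 0 < y ^ γ := fun y hy => Real.rpow_pos_of_pos hy γ
  have hgt : 0 < g t :=
    lt_of_add_integral_mul_comp_le hc hw (fun y hy => (hpos y hy).le) hg hle t ht
  have hW : 0 ≤ ∫ s in a..t, w s :=
    integral_nonneg ht.1 fun s hs => hw s ⟨hs.1, hs.2.trans ht.2⟩
  exact rpow_inv_le_of_div_add_le_div (sub_ne_zero.2 hγ₁.symm) hc hgt hW <|
    add_integral_le_comp_of_add_integral_mul_comp_le hc hwc hw
      (continuousOn_id.rpow_const fun _ _ => Or.inr hγ₀)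
      ((Real.monotoneOn_rpow_Ici_of_exponent_nonneg hγ₀).mono Ioi_subset_Ici_self) hpos
      (fun _ hy => hasDerivAt_rpow_one_sub_div hγ₁ hy) hg hle t ht

theorem stmt_15_general {r σ γ S₀ T x : ℝ} (hr : r ≠ 0) (hxσ : 0 ≤ x * σ) (hγ₀ : 0 ≤ γ)
    (hγ₁ : γ ≠ 1) (hS₀ : 0 < S₀) {g : ℝ → ℝ} (hgc : ContinuousOn g (Icc 0 T))
    (hineq : ∀ t ∈ Icc 0 T,
      S₀ + ∫ s in (0 : ℝ)..t, x * σ * Real.exp (-r * (1 - γ) * s) * g s ^ γ ≤ g t) :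
    ∀ t ∈ Icc 0 T,
      (S₀ ^ (1 - γ) + x * σ / r * (1 - Real.exp (-r * (1 - γ) * t))) ^ (1 / (1 - γ)) ≤ g t := by
  intro t ht
  have hγ' : 1 - γ ≠ 0 := sub_ne_zero.2 hγ₁.symm
  have hintegral : (1 - γ) * ∫ s in (0 : ℝ)..t, x * σ * Real.exp (-r * (1 - γ) * s) =
      x * σ / r * (1 - Real.exp (-r * (1 - γ) * t)) := by
    rw [intervalIntegral.integral_const_mul,
      integral_exp_const_mul (mul_ne_zero (neg_ne_zero.2 hr) hγ'), mul_zero, Real.exp_zero]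
    field_simp
    ring
  rw [one_div, ← hintegral]
  exact rpow_add_integral_rpow_inv_le hγ₀ hγ₁ hS₀ (by fun_prop)
    (fun s _ => mul_nonneg hxσ (Real.exp_pos _).le) hgc hineq t ht

/-- Comparison/Grönwall-type lower bound: with `x ≥ 0`, the
explicit solution `f(t) = (S₀^{1−γ} + (xσ/r)(1 − e^{−r(1−γ)t}))^{1/(1−γ)}` of the
CEV mean equation is a lower bound for every continuous nonnegative `g` on `[0, T]`
satisfying `g(t) ≥ S₀ + ∫₀ᵗ xσ e^{−r(1−γ)s} g(s)^γ ds` — in particular for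
`t ↦ E_{Q₁}[X_t]` of the CEV diffusion under the tilted measure. -/
theorem stmt_15 (r σ γ S₀ T x : ℝ) (hr : 0 < r) (hσ : 0 < σ)
    (hγ : γ ∈ Set.Ico (1 / 2 : ℝ) 1) (hS₀ : 0 < S₀) (hT : 0 < T) (hx : 0 ≤ x)
    (f : ℝ → ℝ)
    (hf : f = fun t =>
      (S₀ ^ (1 - γ) + x * σ / r * (1 - Real.exp (-r * (1 - γ) * t))) ^ (1 / (1 - γ)))
    (g : ℝ → ℝ) (hgc : ContinuousOn g (Set.Icc (0 : ℝ) T))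
    (hgnonneg : ∀ t ∈ Set.Icc (0 : ℝ) T, 0 ≤ g t)
    (hineq : ∀ t ∈ Set.Icc (0 : ℝ) T,
      S₀ + ∫ s in (0 : ℝ)..t, x * σ * Real.exp (-r * (1 - γ) * s) * g s ^ γ ≤ g t) :
    ∀ t ∈ Set.Icc (0 : ℝ) T, f t ≤ g t := by
  subst hf
  exact stmt_15_general hr.ne' (mul_nonneg hx hσ.le) (by linarith [hγ.1]) hγ.2.ne hS₀ hgc hineq
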